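/- arXiv:2405.16463 — 2 statements merged into one kernel-verified Lean document; each statement's English description precedes it below -/
import Mathlib

section
/- Let X^m = (X_1,...,X_m) and Y^m = (Y_1,...,Y_m) be jointly distributed random variables taking values in finite sets. Then the mutual information decomposes as the sum of all entries of the information matrix: I(X^m; Y^m) = Σ_{i=1}^m Σ_{j=1}^m I(X_i; Y_j | X^{i-1}, Y^{j-1}). -/
open MeasureTheory Finset

variable {Ω : Type*} [MeasurableSpace Ω]

/-- Shannon entropy of a random variable `W` with values in a finite set:
`H(W) = -∑ w, P(W = w) log P(W = w)`. -/
noncomputable def entropy (μ : Measure Ω) {α : Type*} [Fintype α] (W : Ω → α) : ℝ :=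
  -∑ w : α, (μ (W ⁻¹' {w})).toReal * Real.log (μ (W ⁻¹' {w})).toReal

/-- Conditional entropy `H(W | V) = H(W, V) - H(V)`. -/
noncomputable def condEntropy (μ : Measure Ω) {α β : Type*} [Fintype α] [Fintype β]
    (W : Ω → α) (V : Ω → β) : ℝ :=
  entropy μ (fun ω => (W ω, V ω)) - entropy μ V

/-- Conditional mutual information `I(A; B | C) = H(A|C) + H(B|C) - H(A,B|C)`. -/
noncomputable def condMI (μ : Measure Ω) {α β γ : Type*} [Fintype α] [Fintype β] [Fintype γ]
    (A : Ω → α) (B : Ω → β) (C : Ω → γ) : ℝ :=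
  condEntropy μ A C + condEntropy μ B C - condEntropy μ (fun ω => (A ω, B ω)) C

/-- Mutual information `I(A; B) = H(A) + H(B) - H(A,B)`. -/
noncomputable def mutualInfo (μ : Measure Ω) {α β : Type*} [Fintype α] [Fintype β]
    (A : Ω → α) (B : Ω → β) : ℝ :=
  entropy μ A + entropy μ B - entropy μ (fun ω => (A ω, B ω))

/-- The prefix `X^i = (X_1, …, X_i)` of the sequence `X` (1-based indexing);
`X^0` is the empty (constant) random variable. -/
def pref {𝒳 : Type*} (X : ℕ → Ω → 𝒳) (i : ℕ) : Ω → (Fin i → 𝒳) :=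
  fun ω t => X (t.1 + 1) ω

/-- The InfoMat entry `I_{i,j} = I(X_i; Y_j | X^{i-1}, Y^{j-1})`. -/
noncomputable def infoMat (μ : Measure Ω) {𝒳 𝒴 : Type*} [Fintype 𝒳] [Fintype 𝒴]
    (X : ℕ → Ω → 𝒳) (Y : ℕ → Ω → 𝒴) (i j : ℕ) : ℝ :=
  condMI μ (X i) (Y j) (fun ω => (pref X (i - 1) ω, pref Y (j - 1) ω))

/-- Directed information `I(X^m → Y^m) = ∑_{i=1}^m I(X^i; Y_i | Y^{i-1})`. -/
noncomputable def directedInfo (μ : Measure Ω) {𝒳 𝒴 : Type*} [Fintype 𝒳] [Fintype 𝒴]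
    (m : ℕ) (X : ℕ → Ω → 𝒳) (Y : ℕ → Ω → 𝒴) : ℝ :=
  ∑ i ∈ Finset.Icc 1 m, condMI μ (pref X i) (Y i) (pref Y (i - 1))

/-- `k`-step delayed directed information
`I(D^k ∘ X^m → Y^m) = ∑_{i=k+1}^m I(X^{i-k}; Y_i | Y^{i-1})`. -/
noncomputable def delayedDI (μ : Measure Ω) {𝒳 𝒴 : Type*} [Fintype 𝒳] [Fintype 𝒴]
    (m k : ℕ) (X : ℕ → Ω → 𝒳) (Y : ℕ → Ω → 𝒴) : ℝ :=
  ∑ i ∈ Finset.Icc (k + 1) m, condMI μ (pref X (i - k)) (Y i) (pref Y (i - 1))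

/-- Instantaneous information `I_inst(X^m, Y^m) = ∑_{i=1}^m I(X_i; Y_i | X^{i-1}, Y^{i-1})`. -/
noncomputable def instInfo (μ : Measure Ω) {𝒳 𝒴 : Type*} [Fintype 𝒳] [Fintype 𝒴]
    (m : ℕ) (X : ℕ → Ω → 𝒳) (Y : ℕ → Ω → 𝒴) : ℝ :=
  ∑ i ∈ Finset.Icc 1 m, infoMat μ X Y i i

variable {𝒳 𝒴 : Type*} [Fintype 𝒳] [MeasurableSpace 𝒳] [MeasurableSingletonClass 𝒳]
  [Fintype 𝒴] [MeasurableSpace 𝒴] [MeasurableSingletonClass 𝒴]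

/-!
Let `H i j` be the joint entropy of the prefixes `X^i` and `Y^j`. Expanding the conditional mutual
information, the entry `I_{i,j}` is minus the mixed second difference of `H` at `(i - 1, j - 1)`.
Summing over the rectangle, only the corners survive: `H m 0 + H 0 n - H 0 0 - H m n`, where
`H 0 0 = 0` is the entropy of a constant, `H m 0 = H(X^m)` and `H 0 n = H(Y^n)`.
-/

theorem sum_Icc_one_eq_sum_range {M : Type*} [AddCommMonoid M] (f : ℕ → M) (n : ℕ) :
    ∑ i ∈ Icc 1 n, f i = ∑ i ∈ range n, f (i + 1) := by
  rw [range_eq_Ico, sum_Ico_add' f 0 n 1, zero_add, Ico_add_one_right_eq_Icc]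

theorem sum_range_sum_range_mixed_sub {M : Type*} [AddCommGroup M] (f : ℕ → ℕ → M) (m n : ℕ) :
    ∑ i ∈ range m, ∑ j ∈ range n, (f (i + 1) j + f i (j + 1) - f i j - f (i + 1) (j + 1)) =
      f m 0 + f 0 n - f 0 0 - f m n := by
  have inner_sum (i : ℕ) :
      ∑ j ∈ range n, (f (i + 1) j + f i (j + 1) - f i j - f (i + 1) (j + 1)) =
        (f (i + 1) 0 - f (i + 1) n) - (f i 0 - f i n) := by
    rw [← sum_range_sub', ← sum_range_sub', ← sum_sub_distrib]
    exact sum_congr rfl fun j _ => by abel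
  simp only [inner_sum]
  rw [sum_range_sub fun i => f i 0 - f i n]
  abel

section Entropy

variable {α β γ : Type*} [Fintype α] [Fintype β] [Fintype γ]

theorem entropy_comp_of_injective (μ : Measure Ω) {f : α → β} (hf : f.Injective) (W : Ω → α) :
    entropy μ (f ∘ W) = entropy μ W := by
  rw [entropy, entropy, neg_inj]
  refine (Fintype.sum_of_injective f hf _ _ (fun b hb => ?_) fun a => ?_).symm
  · have preimage_empty : f ∘ W ⁻¹' {b} = ∅ :=
      Set.preimage_singleton_eq_empty.2 fun hmem => hb (Set.range_comp_subset_range W f hmem)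
    simp [preimage_empty]
  · have preimage_eq : f ∘ W ⁻¹' {f a} = W ⁻¹' {a} := Set.ext fun _ => hf.eq_iff
    rw [preimage_eq]

theorem entropy_congr_of_eq_iff_eq (μ : Measure Ω) {W : Ω → α} {V : Ω → β}
    (h : ∀ ω ω', W ω = W ω' ↔ V ω = V ω') : entropy μ W = entropy μ V := by
  -- Both variables are injective functions of the class of `ω` modulo the kernel of `W`.
  obtain ⟨liftV, rfl⟩ : ∃ f : Quotient (Setoid.ker W) → β, V = f ∘ Quotient.mk _ :=
    ⟨Quotient.lift V fun ω ω' => (h ω ω').1, rfl⟩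
  have liftV_injective : liftV.Injective := by
    rintro ⟨ω⟩ ⟨ω'⟩ hV
    exact Quotient.sound ((h ω ω').2 hV)
  have := Fintype.ofInjective liftV liftV_injective
  calc
    entropy μ W = entropy μ (Quotient.mk (Setoid.ker W)) :=
      entropy_comp_of_injective μ (Setoid.kerLift_injective W) (Quotient.mk _)
    _ = entropy μ (liftV ∘ Quotient.mk _) := (entropy_comp_of_injective μ liftV_injective _).symm

theorem entropy_of_subsingleton [Subsingleton α] (μ : Measure Ω) [IsProbabilityMeasure μ]
    (W : Ω → α) : entropy μ W = 0 := by
  have preimage_eq_univ (w : α) : W ⁻¹' {w} = Set.univ :=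
    Set.eq_univ_of_forall fun _ => Subsingleton.elim _ _
  simp [entropy, preimage_eq_univ]

theorem condMI_eq_entropy (μ : Measure Ω) (A : Ω → α) (B : Ω → β) (C : Ω → γ) :
    condMI μ A B C =
      entropy μ (fun ω => (A ω, C ω)) + entropy μ (fun ω => (B ω, C ω)) - entropy μ C -
        entropy μ (fun ω => ((A ω, B ω), C ω)) := by
  unfold condMI condEntropy
  ring

end Entropy

theorem pref_succ_eq_iff {Ω α : Type*} (X : ℕ → Ω → α) (n : ℕ) (ω ω' : Ω) :
    pref X (n + 1) ω = pref X (n + 1) ω' ↔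
      pref X n ω = pref X n ω' ∧ X (n + 1) ω = X (n + 1) ω' := by
  simp [pref, funext_iff, Fin.forall_fin_succ']

section InfoMat

variable {α β : Type*} [Fintype α] [Fintype β]

/-- The joint entropy `H(X^i, Y^j)` of two prefixes, as a function on the grid of pairs `(i, j)`;
the entries of the information matrix are its negated mixed second differences. -/
noncomputable def prefEntropy (μ : Measure Ω) (X : ℕ → Ω → α) (Y : ℕ → Ω → β) (i j : ℕ) : ℝ :=
  entropy μ fun ω => (pref X i ω, pref Y j ω)

theorem prefEntropy_zero_right (μ : Measure Ω) (X : ℕ → Ω → α) (Y : ℕ → Ω → β) (i : ℕ) :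
    prefEntropy μ X Y i 0 = entropy μ (pref X i) :=
  entropy_congr_of_eq_iff_eq μ fun _ _ => by simp [eq_iff_true_of_subsingleton]

theorem prefEntropy_zero_left (μ : Measure Ω) (X : ℕ → Ω → α) (Y : ℕ → Ω → β) (j : ℕ) :
    prefEntropy μ X Y 0 j = entropy μ (pref Y j) :=
  entropy_congr_of_eq_iff_eq μ fun _ _ => by simp [eq_iff_true_of_subsingleton]

theorem infoMat_succ_succ (μ : Measure Ω) (X : ℕ → Ω → α) (Y : ℕ → Ω → β) (i j : ℕ) :
    infoMat μ X Y (i + 1) (j + 1) =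
      prefEntropy μ X Y (i + 1) j + prefEntropy μ X Y i (j + 1) - prefEntropy μ X Y i j -
        prefEntropy μ X Y (i + 1) (j + 1) := by
  have entropy_X : prefEntropy μ X Y (i + 1) j =
      entropy μ fun ω => (X (i + 1) ω, pref X i ω, pref Y j ω) :=
    entropy_congr_of_eq_iff_eq μ fun ω ω' => by
      simp only [Prod.mk.injEq, pref_succ_eq_iff]
      tauto
  have entropy_Y : prefEntropy μ X Y i (j + 1) =
      entropy μ fun ω => (Y (j + 1) ω, pref X i ω, pref Y j ω) :=
    entropy_congr_of_eq_iff_eq μ fun ω ω' => by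
      simp only [Prod.mk.injEq, pref_succ_eq_iff]
      tauto
  have entropy_XY : prefEntropy μ X Y (i + 1) (j + 1) =
      entropy μ fun ω => ((X (i + 1) ω, Y (j + 1) ω), pref X i ω, pref Y j ω) :=
    entropy_congr_of_eq_iff_eq μ fun ω ω' => by
      simp only [Prod.mk.injEq, pref_succ_eq_iff]
      tauto
  rw [entropy_X, entropy_Y, entropy_XY]
  exact condMI_eq_entropy μ _ _ _

theorem mutualInfo_eq_sum_infoMat_general (μ : Measure Ω) [IsProbabilityMeasure μ] (m n : ℕ)
    (X : ℕ → Ω → α) (Y : ℕ → Ω → β) :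
    mutualInfo μ (pref X m) (pref Y n) =
      ∑ i ∈ Icc 1 m, ∑ j ∈ Icc 1 n, infoMat μ X Y i j := by
  have prefEntropy_zero_zero : prefEntropy μ X Y 0 0 = 0 := entropy_of_subsingleton μ _
  symm
  calc
    ∑ i ∈ Icc 1 m, ∑ j ∈ Icc 1 n, infoMat μ X Y i j
      = prefEntropy μ X Y m 0 + prefEntropy μ X Y 0 n - prefEntropy μ X Y 0 0 -
          prefEntropy μ X Y m n := by
        simp only [sum_Icc_one_eq_sum_range, infoMat_succ_succ, sum_range_sum_range_mixed_sub]
    _ = mutualInfo μ (pref X m) (pref Y n) := by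
        rw [prefEntropy_zero_right, prefEntropy_zero_left, prefEntropy_zero_zero, sub_zero]
        rfl

end InfoMat

/-- The mutual information `I(X^m; Y^m)` is the sum of all entries of the
InfoMat: `I(X^m; Y^m) = ∑_{i=1}^m ∑_{j=1}^m I(X_i; Y_j | X^{i-1}, Y^{j-1})`. -/
theorem mutualInfo_eq_sum_infoMat (μ : Measure Ω) [IsProbabilityMeasure μ]
    (m : ℕ) (X : ℕ → Ω → 𝒳) (Y : ℕ → Ω → 𝒴)
    (hX : ∀ i, Measurable (X i)) (hY : ∀ j, Measurable (Y j)) :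
    mutualInfo μ (pref X m) (pref Y m)
      = ∑ i ∈ Finset.Icc 1 m, ∑ j ∈ Finset.Icc 1 m, infoMat μ X Y i j :=
  mutualInfo_eq_sum_infoMat_general μ m m X Y
end

section
/- (Amblard–Michel conservation law.) Let X^m and Y^m be jointly distributed random variables taking values in finite sets. Then I(X^m; Y^m) = I(D^1 ∘ X^m → Y^m) + I(D^1 ∘ Y^m → X^m) + I_inst(X^m, Y^m), i.e., mutual information decomposes into the two one-step delayed directed information terms plus the instantaneous information. -/
open MeasureTheory Finset

variable {Ω : Type*} [MeasurableSpace Ω]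

variable {𝒳 𝒴 : Type*} [Fintype 𝒳] [MeasurableSpace 𝒳] [MeasurableSingletonClass 𝒳]
  [Fintype 𝒴] [MeasurableSpace 𝒴] [MeasurableSingletonClass 𝒴]

/-!
The conservation law is read off the matrix `I_{i,j} = I(X_i; Y_j | X^{i-1}, Y^{j-1})`. The chain
rule in both arguments shows that `I(X^m; Y^m)` is the sum of all entries with `1 ≤ i, j ≤ m`. The
chain rule in one argument shows that the delayed directed information `I(D^1 ∘ X^m → Y^m)` is the
sum of the entries with `i < j`, and by symmetry `I(D^1 ∘ Y^m → X^m)` is the sum of those with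
`j < i`. The diagonal is the instantaneous information.
-/

section Relabelling

variable (μ : Measure Ω) {α α' β β' γ γ' : Type*} [Fintype α] [Fintype α'] [Fintype β] [Fintype β']
  [Fintype γ] [Fintype γ']

theorem entropy_equiv_comp (e : α ≃ α') (W : Ω → α) :
    entropy μ (fun ω => e (W ω)) = entropy μ W := by
  have preimage_singleton (w : α) : W ⁻¹' {w} = (fun ω => e (W ω)) ⁻¹' {e w} := by
    ext ω
    simp
  unfold entropy
  congr 1
  exact (Fintype.sum_equiv e _ _ fun w => by rw [preimage_singleton]).symm

theorem condEntropy_equiv_comp (e₁ : α ≃ α') (e₂ : β ≃ β') (W : Ω → α) (V : Ω → β) :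
    condEntropy μ (fun ω => e₁ (W ω)) (fun ω => e₂ (V ω)) = condEntropy μ W V :=
  congrArg₂ (· - ·) (entropy_equiv_comp μ (e₁.prodCongr e₂) fun ω => (W ω, V ω))
    (entropy_equiv_comp μ e₂ V)

theorem condMI_equiv_comp (e₁ : α ≃ α') (e₂ : β ≃ β') (e₃ : γ ≃ γ')
    (A : Ω → α) (B : Ω → β) (C : Ω → γ) :
    condMI μ (fun ω => e₁ (A ω)) (fun ω => e₂ (B ω)) (fun ω => e₃ (C ω)) = condMI μ A B C := by
  have joint := condEntropy_equiv_comp μ (e₁.prodCongr e₂) e₃ (fun ω => (A ω, B ω)) C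
  simp only [Equiv.prodCongr_apply, Prod.map_apply] at joint
  simp only [condMI, condEntropy_equiv_comp, joint]

end Relabelling

section ChainRule

variable (μ : Measure Ω) {α α' β γ : Type*} [Fintype α] [Fintype α'] [Fintype β] [Fintype γ]

theorem condMI_comm (A : Ω → α) (B : Ω → β) (C : Ω → γ) : condMI μ A B C = condMI μ B A C := by
  have joint : condEntropy μ (fun ω => (B ω, A ω)) C = condEntropy μ (fun ω => (A ω, B ω)) C :=
    condEntropy_equiv_comp μ (Equiv.prodComm α β) (Equiv.refl γ) (fun ω => (A ω, B ω)) C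
  rw [condMI, condMI, joint, add_comm (condEntropy μ A C)]

theorem condMI_prodMk_left (A' : Ω → α') (A : Ω → α) (B : Ω → β) (C : Ω → γ) :
    condMI μ (fun ω => (A' ω, A ω)) B C
      = condMI μ A B C + condMI μ A' B (fun ω => (A ω, C ω)) := by
  have entropy_A'AC : entropy μ (fun ω => (A' ω, (A ω, C ω)))
      = entropy μ (fun ω => ((A' ω, A ω), C ω)) :=
    entropy_equiv_comp μ (Equiv.prodAssoc α' α γ) fun ω => ((A' ω, A ω), C ω)
  have entropy_ABC : entropy μ (fun ω => (B ω, (A ω, C ω)))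
      = entropy μ (fun ω => ((A ω, B ω), C ω)) :=
    entropy_equiv_comp μ (((Equiv.prodComm α β).prodCongr (Equiv.refl γ)).trans
      (Equiv.prodAssoc β α γ)) fun ω => ((A ω, B ω), C ω)
  have entropy_A'ABC : entropy μ (fun ω => ((A' ω, B ω), (A ω, C ω)))
      = entropy μ (fun ω => (((A' ω, A ω), B ω), C ω)) :=
    entropy_equiv_comp μ ((Equiv.prodAssoc (α' × α) β γ).trans
      (Equiv.prodProdProdComm α' α β γ)) fun ω => (((A' ω, A ω), B ω), C ω)
  simp only [condMI, condEntropy, entropy_A'AC, entropy_ABC, entropy_A'ABC]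
  ring

end ChainRule

section TrivialConditioning

variable (μ : Measure Ω) {α β γ : Type*} [Fintype α] [Fintype β] [Fintype γ] [Unique γ]

theorem entropy_eq_zero_of_unique [IsProbabilityMeasure μ] (C : Ω → γ) : entropy μ C = 0 := by
  have preimage_default : C ⁻¹' {default} = Set.univ :=
    Set.eq_univ_of_forall fun _ => Subsingleton.elim _ _
  simp [entropy, preimage_default]

theorem entropy_prodMk_unique (A : Ω → α) (C : Ω → γ) :
    entropy μ (fun ω => (A ω, C ω)) = entropy μ A :=
  (entropy_equiv_comp μ (Equiv.prodUnique α γ) fun ω => (A ω, C ω)).symm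

theorem condMI_unique_left (C : Ω → γ) (A : Ω → α) (B : Ω → β) : condMI μ C A B = 0 := by
  have entropy_CB : entropy μ B = entropy μ (fun ω => (C ω, B ω)) :=
    entropy_equiv_comp μ (Equiv.uniqueProd β γ) fun ω => (C ω, B ω)
  have entropy_CAB : entropy μ (fun ω => (A ω, B ω)) = entropy μ (fun ω => ((C ω, A ω), B ω)) :=
    entropy_equiv_comp μ ((Equiv.uniqueProd α γ).prodCongr (Equiv.refl β))
      fun ω => ((C ω, A ω), B ω)
  simp only [condMI, condEntropy, ← entropy_CB, ← entropy_CAB]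
  ring

theorem condMI_eq_mutualInfo_of_unique [IsProbabilityMeasure μ]
    (A : Ω → α) (B : Ω → β) (C : Ω → γ) : condMI μ A B C = mutualInfo μ A B := by
  simp only [condMI, condEntropy, mutualInfo, entropy_prodMk_unique, entropy_eq_zero_of_unique,
    sub_zero]

end TrivialConditioning

section Prefixes

variable (μ : Measure Ω) {α β γ : Type*} [Fintype α] [Fintype β] [Fintype γ]

theorem snocEquiv_pref {S α : Type*} (X : ℕ → S → α) (n : ℕ) (s : S) :
    Fin.snocEquiv (fun _ => α) (X (n + 1) s, pref X n s) = pref X (n + 1) s := by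
  funext t
  refine Fin.lastCases ?_ (fun i => ?_) t <;> simp [Fin.snocEquiv, pref]

theorem condMI_pref_succ_left (X : ℕ → Ω → α) (B : Ω → β) (C : Ω → γ) (n : ℕ) :
    condMI μ (pref X (n + 1)) B C
      = condMI μ (pref X n) B C + condMI μ (X (n + 1)) B (fun ω => (pref X n ω, C ω)) := by
  have split_last : condMI μ (pref X (n + 1)) B C
      = condMI μ (fun ω => (X (n + 1) ω, pref X n ω)) B C := by
    simpa only [snocEquiv_pref, Equiv.refl_apply] using
      condMI_equiv_comp μ (Fin.snocEquiv fun _ => α) (Equiv.refl β) (Equiv.refl γ)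
        (fun ω => (X (n + 1) ω, pref X n ω)) B C
  rw [split_last, condMI_prodMk_left]

theorem condMI_pref_left (X : ℕ → Ω → α) (B : Ω → β) (C : Ω → γ) (n : ℕ) :
    condMI μ (pref X n) B C
      = ∑ i ∈ Icc 1 n, condMI μ (X i) B (fun ω => (pref X (i - 1) ω, C ω)) := by
  induction n with
  | zero => simpa using condMI_unique_left μ (pref X 0) B C
  | succ n ih =>
    rw [condMI_pref_succ_left, ih, sum_Icc_succ_top (Nat.le_add_left 1 n), Nat.add_sub_cancel]

theorem mutualInfo_pref_right [IsProbabilityMeasure μ] (A : Ω → α) (Y : ℕ → Ω → β) (n : ℕ) :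
    mutualInfo μ A (pref Y n) = ∑ j ∈ Icc 1 n, condMI μ A (Y j) (pref Y (j - 1)) := by
  have drop_unit (j : ℕ) : condMI μ (Y j) A (pref Y (j - 1))
      = condMI μ (Y j) A (fun ω => (pref Y (j - 1) ω, ())) :=
    condMI_equiv_comp μ (Equiv.refl β) (Equiv.refl α) (Equiv.prodPUnit _)
      (Y j) A fun ω => (pref Y (j - 1) ω, ())
  calc mutualInfo μ A (pref Y n)
      = condMI μ A (pref Y n) (fun _ => ()) := (condMI_eq_mutualInfo_of_unique μ _ _ _).symm
    _ = condMI μ (pref Y n) A (fun _ => ()) := condMI_comm μ _ _ _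
    _ = ∑ j ∈ Icc 1 n, condMI μ (Y j) A (fun ω => (pref Y (j - 1) ω, ())) :=
      condMI_pref_left μ Y A _ n
    _ = ∑ j ∈ Icc 1 n, condMI μ A (Y j) (pref Y (j - 1)) :=
      sum_congr rfl fun j _ => by rw [← drop_unit, condMI_comm]

end Prefixes

section InfoMat

variable (μ : Measure Ω) {α β : Type*} [Fintype α] [Fintype β] (X : ℕ → Ω → α) (Y : ℕ → Ω → β)

theorem infoMat_swap (i j : ℕ) : infoMat μ Y X j i = infoMat μ X Y i j := by
  rw [infoMat, condMI_comm]
  exact condMI_equiv_comp μ (Equiv.refl α) (Equiv.refl β) (Equiv.prodComm _ _)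
    (X i) (Y j) fun ω => (pref X (i - 1) ω, pref Y (j - 1) ω)

theorem condMI_pref_eq_sum_infoMat (n j : ℕ) :
    condMI μ (pref X n) (Y j) (pref Y (j - 1)) = ∑ i ∈ Icc 1 n, infoMat μ X Y i j :=
  condMI_pref_left μ X (Y j) (pref Y (j - 1)) n

theorem mutualInfo_pref_pref_eq_sum_infoMat [IsProbabilityMeasure μ] (m n : ℕ) :
    mutualInfo μ (pref X m) (pref Y n) = ∑ j ∈ Icc 1 n, ∑ i ∈ Icc 1 m, infoMat μ X Y i j := by
  simp only [mutualInfo_pref_right, condMI_pref_eq_sum_infoMat]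

-- Truncated subtraction makes the inner sum empty for `j ≤ k`.
theorem delayedDI_eq_sum_infoMat (m k : ℕ) :
    delayedDI μ m k X Y = ∑ j ∈ Icc 1 m, ∑ i ∈ Icc 1 (j - k), infoMat μ X Y i j := by
  simp only [delayedDI, condMI_pref_eq_sum_infoMat]
  refine sum_subset (Icc_subset_Icc_left (Nat.le_add_left 1 k)) fun j hj hj' => ?_
  have hjk : j - k = 0 := by
    simp only [mem_Icc] at hj hj'
    omega
  simp [hjk]

end InfoMat

theorem sum_Icc_sum_Icc_eq_lt_add_gt_add_diag {M : Type*} [AddCommMonoid M]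
    (f : ℕ → ℕ → M) (m : ℕ) :
    ∑ j ∈ Icc 1 m, ∑ i ∈ Icc 1 m, f i j
      = ∑ j ∈ Icc 1 m, ∑ i ∈ Icc 1 (j - 1), f i j + ∑ i ∈ Icc 1 m, ∑ j ∈ Icc 1 (i - 1), f i j
        + ∑ i ∈ Icc 1 m, f i i := by
  induction m with
  | zero => simp
  | succ m ih =>
    simp only [sum_Icc_succ_top (Nat.le_add_left 1 m), sum_add_distrib, ih, Nat.add_sub_cancel]
    abel

/-- **Amblard–Michel conservation law.**
`I(X^m; Y^m) = I(D^1 ∘ X^m → Y^m) + I(D^1 ∘ Y^m → X^m) + I_inst(X^m, Y^m)`. -/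
theorem amblard_michel_conservation (μ : Measure Ω) [IsProbabilityMeasure μ]
    (m : ℕ) (X : ℕ → Ω → 𝒳) (Y : ℕ → Ω → 𝒴)
    (hX : ∀ i, Measurable (X i)) (hY : ∀ j, Measurable (Y j)) :
    mutualInfo μ (pref X m) (pref Y m)
      = delayedDI μ m 1 X Y + delayedDI μ m 1 Y X + instInfo μ m X Y := by
  rw [mutualInfo_pref_pref_eq_sum_infoMat, sum_Icc_sum_Icc_eq_lt_add_gt_add_diag,
    delayedDI_eq_sum_infoMat, delayedDI_eq_sum_infoMat]
  simp only [infoMat_swap μ X Y, instInfo]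
end
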